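/- arXiv:2307.00615 — 4 statements merged into one kernel-verified Lean document; each statement's English description precedes it below -/
import Mathlib

section
/- Let E be the diagonal V×V matrix with E_{ii} = d_i. Then E is invertible, and the matrix E·L·E⁻¹ is symmetric; explicitly, for i ≠ j, (E·L·E⁻¹)_{ij} = 1/(d_i + d_j) if i is adjacent to j, and (E·L·E⁻¹)_{ij} = 0 if i is not adjacent to j. -/
open Matrix BigOperators

/-- The influence matrix of a finite simple graph. -/
noncomputable def influenceMatrix {V : Type*} [Fintype V] [DecidableEq V]
    (G : SimpleGraph V) [DecidableRel G.Adj] : Matrix V V ℝ :=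
  Matrix.of fun i j =>
    if i = j then
      -∑ l ∈ G.neighborFinset i,
        ((G.degree l : ℝ) / (G.degree i : ℝ)) / ((G.degree i : ℝ) + (G.degree l : ℝ))
    else if G.Adj i j then
      ((G.degree j : ℝ) / (G.degree i : ℝ)) / ((G.degree i : ℝ) + (G.degree j : ℝ))
    else 0

/-!
Conjugation by `E = diag(d_i)` multiplies the `(i, j)` entry of a matrix by `d_i / d_j`. Off the
diagonal this cancels exactly the factor `d_j / d_i` of `L_{ij}`, and what is left,
`1 / (d_i + d_j)` on the edges and `0` elsewhere, is symmetric in `i` and `j`.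
-/

theorem isSymm_of_pairwise {n α : Type*} {M : Matrix n n α}
    (h : Pairwise fun i j => M j i = M i j) : M.IsSymm :=
  Matrix.IsSymm.ext fun i j => by
    obtain rfl | hij := eq_or_ne i j
    · rfl
    · exact h hij

section DiagonalConj

variable {n K : Type*} [Fintype n] [DecidableEq n] [Field K] {d : n → K}

theorem diagonal_inv_of_forall_ne_zero (hd : ∀ i, d i ≠ 0) : (diagonal d)⁻¹ = diagonal d⁻¹ :=
  inv_eq_right_inv <| by simp [diagonal_mul_diagonal, hd]

theorem diagonal_mul_mul_diagonal_inv_apply (hd : ∀ i, d i ≠ 0) (M : Matrix n n K) (i j : n) :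
    (diagonal d * M * (diagonal d)⁻¹) i j = d i * M i j / d j := by
  rw [diagonal_inv_of_forall_ne_zero hd, mul_diagonal, diagonal_mul, Pi.inv_apply, div_eq_mul_inv]

end DiagonalConj

theorem degree_cast_ne_zero_iff_not_isIsolated {V R : Type*} [AddMonoidWithOne R] [CharZero R]
    {G : SimpleGraph V} {v : V} [Fintype (G.neighborSet v)] :
    (G.degree v : R) ≠ 0 ↔ ¬ G.IsIsolated v := by
  rw [Nat.cast_ne_zero, ← Nat.pos_iff_ne_zero, G.degree_pos_iff_exists_adj,
    G.exists_adj_iff_not_isIsolated]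

theorem isUnit_degMatrix_iff_forall_not_isIsolated {V K : Type*} [Fintype V] [DecidableEq V]
    {G : SimpleGraph V} [DecidableRel G.Adj] [Field K] [CharZero K] :
    IsUnit (G.degMatrix K) ↔ ∀ v, ¬ G.IsIsolated v := by
  simp only [SimpleGraph.degMatrix, isUnit_diagonal, Pi.isUnit_iff, isUnit_iff_ne_zero,
    degree_cast_ne_zero_iff_not_isIsolated]

section InfluenceMatrix

variable {V : Type*} [Fintype V] [DecidableEq V] (G : SimpleGraph V) [DecidableRel G.Adj]

theorem influenceMatrix_apply_of_ne {i j : V} (hij : i ≠ j) :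
    influenceMatrix G i j =
      if G.Adj i j then
        ((G.degree j : ℝ) / (G.degree i : ℝ)) / ((G.degree i : ℝ) + (G.degree j : ℝ))
      else 0 :=
  if_neg hij

theorem degree_mul_influenceMatrix_div_degree_of_ne {i j : V} (hij : i ≠ j) :
    (G.degree i : ℝ) * influenceMatrix G i j / (G.degree j : ℝ) =
      if G.Adj i j then 1 / ((G.degree i : ℝ) + (G.degree j : ℝ)) else 0 := by
  rw [influenceMatrix_apply_of_ne G hij]
  split_ifs with hadj
  · have hi : (G.degree i : ℝ) ≠ 0 :=
      degree_cast_ne_zero_iff_not_isIsolated.mpr hadj.not_isIsolated_left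
    have hj : (G.degree j : ℝ) ≠ 0 :=
      degree_cast_ne_zero_iff_not_isIsolated.mpr hadj.not_isIsolated_right
    field_simp
  · rw [mul_zero, zero_div]

variable {G}

theorem degMatrix_conj_influenceMatrix_apply_of_ne (hG : ∀ v, ¬ G.IsIsolated v) {i j : V}
    (hij : i ≠ j) :
    (G.degMatrix ℝ * influenceMatrix G * (G.degMatrix ℝ)⁻¹) i j =
      if G.Adj i j then 1 / ((G.degree i : ℝ) + (G.degree j : ℝ)) else 0 :=
  (diagonal_mul_mul_diagonal_inv_apply
    (fun v => degree_cast_ne_zero_iff_not_isIsolated.mpr (hG v)) _ i j).trans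
      (degree_mul_influenceMatrix_div_degree_of_ne G hij)

theorem isSymm_degMatrix_conj_influenceMatrix (hG : ∀ v, ¬ G.IsIsolated v) :
    (G.degMatrix ℝ * influenceMatrix G * (G.degMatrix ℝ)⁻¹).IsSymm :=
  isSymm_of_pairwise fun i j hij => by
    simp only [degMatrix_conj_influenceMatrix_apply_of_ne hG hij,
      degMatrix_conj_influenceMatrix_apply_of_ne hG hij.symm, G.adj_comm j i,
      add_comm (G.degree j : ℝ)]

theorem influenceMatrix_conjugate_symmetric_general (hG : ∀ v, ¬ G.IsIsolated v) :
    IsUnit (G.degMatrix ℝ) ∧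
    (G.degMatrix ℝ * influenceMatrix G * (G.degMatrix ℝ)⁻¹).IsSymm ∧
    ∀ i j, i ≠ j →
      (G.degMatrix ℝ * influenceMatrix G * (G.degMatrix ℝ)⁻¹) i j =
        if G.Adj i j then 1 / ((G.degree i : ℝ) + (G.degree j : ℝ)) else 0 :=
  ⟨isUnit_degMatrix_iff_forall_not_isIsolated.mpr hG,
    isSymm_degMatrix_conj_influenceMatrix hG,
    fun _ _ => degMatrix_conj_influenceMatrix_apply_of_ne hG⟩

end InfluenceMatrix

/-- With `E = diag(d_i)`, `E` is invertible and `E·L·E⁻¹` is symmetric, with off-diagonal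
entries `1/(d_i+d_j)` for adjacent `i, j` and `0` for non-adjacent `i ≠ j`. -/
theorem influenceMatrix_conjugate_symmetric {V : Type*} [Fintype V] [DecidableEq V]
    (G : SimpleGraph V) [DecidableRel G.Adj]
    (hconn : G.Connected) (hcard : 2 ≤ Fintype.card V) :
    IsUnit (Matrix.diagonal fun i => (G.degree i : ℝ)) ∧
    ((Matrix.diagonal fun i => (G.degree i : ℝ)) * influenceMatrix G *
        (Matrix.diagonal fun i => (G.degree i : ℝ))⁻¹).IsSymm ∧
    ∀ i j, i ≠ j →
      ((Matrix.diagonal fun i => (G.degree i : ℝ)) * influenceMatrix G *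
          (Matrix.diagonal fun i => (G.degree i : ℝ))⁻¹) i j =
        if G.Adj i j then 1 / ((G.degree i : ℝ) + (G.degree j : ℝ)) else 0 := by
  have : Nontrivial V := Fintype.one_lt_card_iff_nontrivial.mp hcard
  exact influenceMatrix_conjugate_symmetric_general hconn.preconnected.not_isIsolated
end

section
/- The influence matrix L is diagonalizable over the reals: there exist an invertible real V×V matrix P and a diagonal real V×V matrix D such that L = P·D·P⁻¹, and moreover P and D can be chosen so that for some index c, the c-th column of P is the all-ones vector and D_{cc} = 0. -/
open Matrix BigOperators

/-!
Scaling row `i` of `L` by `d_i ^ 2` makes the off-diagonal entries `d_i d_j / (d_i + d_j)`, so `L`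
is self-adjoint for the inner product `∑ i, d_i ^ 2 x_i y_i` and has a real eigenbasis. The rows of
`L` sum to zero, so the all-ones vector lies in the kernel; expanding it in the eigenbasis, any
basis vector that occurs with nonzero coefficient has eigenvalue `0` and can be exchanged for it.
-/

section Eigenbasis

variable {n : Type*} [Fintype n] [DecidableEq n]

/-- The columns of `P` form a basis of eigenvectors of `A`, column `j` having eigenvalue `d j`. The
condition is written `A * P = P * diagonal d`, free of inverses, instead of
`A = P * diagonal d * P⁻¹`. -/
structure IsEigenbasisMatrix {R : Type*} [CommRing R] (A P : Matrix n n R) (d : n → R) : Prop where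
  isUnit : IsUnit P
  mul_eq : A * P = P * diagonal d

theorem det_updateCol_mulVec {R : Type*} [CommRing R] (P : Matrix n n R) (c : n)
    (y : n → R) : (P.updateCol c (P *ᵥ y)).det = P.det * y c := by
  rw [← cramer_apply, cramer_eq_adjugate_mulVec, mulVec_mulVec, adjugate_mul, smul_mulVec,
    one_mulVec, Pi.smul_apply, smul_eq_mul]

namespace IsEigenbasisMatrix

section CommRing

variable {R : Type*} [CommRing R] {A P S : Matrix n n R} {d y : n → R}

theorem eq_mul_diagonal_mul_inv (h : IsEigenbasisMatrix A P d) : A = P * diagonal d * P⁻¹ := by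
  rw [← h.mul_eq, mul_nonsing_inv_cancel_right _ _ ((isUnit_iff_isUnit_det P).1 h.isUnit)]

theorem of_conj (hS : IsUnit S) (h : IsEigenbasisMatrix (S * A * S⁻¹) P d) :
    IsEigenbasisMatrix A (S⁻¹ * P) d where
  isUnit := (isUnit_nonsing_inv_iff.2 hS).mul h.isUnit
  mul_eq := calc
    A * (S⁻¹ * P) = S⁻¹ * (S * A * S⁻¹ * P) := by
      simp only [Matrix.mul_assoc,
        nonsing_inv_mul_cancel_left _ _ ((isUnit_iff_isUnit_det S).1 hS)]
    _ = S⁻¹ * P * diagonal d := by rw [h.mul_eq, Matrix.mul_assoc]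

theorem mulVec_mulVec_eq_iff (h : IsEigenbasisMatrix A P d) {μ : R} :
    A *ᵥ (P *ᵥ y) = μ • P *ᵥ y ↔ ∀ i, d i * y i = μ * y i := by
  rw [mulVec_mulVec, h.mul_eq, ← mulVec_mulVec, ← mulVec_smul,
    (mulVec_injective_of_isUnit h.isUnit).eq_iff, funext_iff]
  simp only [mulVec_diagonal, Pi.smul_apply, smul_eq_mul]

theorem updateCol (h : IsEigenbasisMatrix A P d) {c : n}
    (hv : A *ᵥ (P *ᵥ y) = d c • P *ᵥ y) (hyc : IsUnit (y c)) :
    IsEigenbasisMatrix A (P.updateCol c (P *ᵥ y)) d where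
  isUnit := by
    rw [isUnit_iff_isUnit_det, det_updateCol_mulVec]
    exact ((isUnit_iff_isUnit_det P).1 h.isUnit).mul hyc
  mul_eq := by
    rw [mul_updateCol, h.mul_eq, hv]
    ext i j
    by_cases hj : j = c
    · subst hj
      simp [mul_diagonal, mul_comm]
    · simp [mul_diagonal, hj]

end CommRing

section Field

variable {K : Type*} [Field K] {A P : Matrix n n K} {d v : n → K} {μ : K}

theorem exists_updateCol (h : IsEigenbasisMatrix A P d) (hv₀ : v ≠ 0) (hv : A *ᵥ v = μ • v) :
    ∃ c, d c = μ ∧ IsEigenbasisMatrix A (P.updateCol c v) d := by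
  obtain ⟨y, rfl⟩ := mulVec_surjective_iff_isUnit.2 h.isUnit v
  obtain ⟨c, hyc⟩ : ∃ c, y c ≠ 0 := Function.ne_iff.1 fun hy : y = 0 => hv₀ (by simp [hy])
  have hdc : d c = μ := mul_right_cancel₀ hyc (h.mulVec_mulVec_eq_iff.1 hv c)
  exact ⟨c, hdc, h.updateCol (hdc ▸ hv) hyc.isUnit⟩

end Field

section RCLike

variable {𝕜 : Type*} [RCLike 𝕜] {A S : Matrix n n 𝕜}

theorem of_isHermitian (hA : A.IsHermitian) :
    IsEigenbasisMatrix A hA.eigenvectorUnitary (RCLike.ofReal ∘ hA.eigenvalues) where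
  isUnit := (Unitary.toUnits hA.eigenvectorUnitary).isUnit
  mul_eq := by
    simpa only [Unitary.conjStarAlgAut_apply, Matrix.mul_assoc, Unitary.coe_star_mul_self,
      Matrix.mul_one] using
      congrArg (· * (hA.eigenvectorUnitary : Matrix n n 𝕜)) hA.spectral_theorem

open scoped ComplexOrder MatrixOrder Matrix.Norms.L2Operator in
/-- The hypotheses say that `A` is self-adjoint for the inner product `⟪x, y⟫ = xᴴ S y`. Writing
`S = Bᴴ B`, the matrix `B A B⁻¹ = (B⁻¹)ᴴ (S A) B⁻¹` is Hermitian. -/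
theorem exists_of_posDef_of_isHermitian_mul (hS : S.PosDef) (hSA : (S * A).IsHermitian) :
    ∃ (P : Matrix n n 𝕜) (d : n → ℝ), IsEigenbasisMatrix A P (RCLike.ofReal ∘ d) := by
  obtain ⟨B, hB, rfl⟩ :=
    CStarAlgebra.isStrictlyPositive_iff_eq_star_mul_self.1 hS.isStrictlyPositive
  have hBAB : (B⁻¹)ᴴ * (star B * B * A) * B⁻¹ = B * A * B⁻¹ := by
    have hBB : (B⁻¹)ᴴ * Bᴴ = 1 := by
      rw [← conjTranspose_mul, mul_nonsing_inv _ ((isUnit_iff_isUnit_det B).1 hB),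
        conjTranspose_one]
    simp only [star_eq_conjTranspose, ← Matrix.mul_assoc, hBB, Matrix.one_mul]
  have hHerm : (B * A * B⁻¹).IsHermitian := hBAB ▸ isHermitian_conjTranspose_mul_mul B⁻¹ hSA
  exact ⟨_, _, of_conj hB (of_isHermitian hHerm)⟩

end RCLike

end IsEigenbasisMatrix

end Eigenbasis

section InfluenceMatrix

variable {V : Type*} [Fintype V] (G : SimpleGraph V) [DecidableRel G.Adj]

/-- The off-diagonal part of the influence matrix: the weight `(d_j / d_i) / (d_i + d_j)` with which
`j` acts on a neighbour `i`. -/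
noncomputable def influenceWeight : Matrix V V ℝ :=
  Matrix.of fun i j =>
    if G.Adj i j then
      ((G.degree j : ℝ) / (G.degree i : ℝ)) / ((G.degree i : ℝ) + (G.degree j : ℝ))
    else 0

/-- Positive weights `m` with `m i * L i j = m j * L j i`: the squared degrees, with `1` in place of
`0` at isolated vertices, where `L` vanishes. -/
def reversingWeight (i : V) : ℝ := ((max (G.degree i) 1 : ℕ) : ℝ) ^ 2

theorem reversingWeight_pos (i : V) : 0 < reversingWeight G i := by
  unfold reversingWeight
  positivity

variable {G} in
theorem reversingWeight_of_adj {i j : V} (hij : G.Adj i j) :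
    reversingWeight G i = (G.degree i : ℝ) ^ 2 := by
  rw [reversingWeight, max_eq_left hij.degree_pos_left]

variable {G} in
theorem reversingWeight_mul_influenceWeight_of_adj {i j : V} (hij : G.Adj i j) :
    reversingWeight G i * influenceWeight G i j =
      (G.degree i : ℝ) * G.degree j / (G.degree i + G.degree j) := by
  have hi : (G.degree i : ℝ) ≠ 0 := Nat.cast_ne_zero.2 hij.degree_pos_left.ne'
  rw [reversingWeight_of_adj hij, influenceWeight, of_apply, if_pos hij]
  field_simp

variable [DecidableEq V]

theorem influenceMatrix_eq_influenceWeight_sub_diagonal :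
    influenceMatrix G = influenceWeight G - diagonal (influenceWeight G *ᵥ 1) := by
  ext i j
  by_cases hij : i = j
  · subst hij
    simp [influenceMatrix, influenceWeight, mulVec, dotProduct, G.neighborFinset_eq_filter,
      Finset.sum_filter]
  · simp [influenceMatrix, influenceWeight, hij]

theorem influenceMatrix_mulVec_one : influenceMatrix G *ᵥ 1 = 0 := by
  ext i
  simp [influenceMatrix_eq_influenceWeight_sub_diagonal, sub_mulVec, mulVec_diagonal]

theorem isHermitian_diagonal_reversingWeight_mul_influenceWeight :
    (diagonal (reversingWeight G) * influenceWeight G).IsHermitian := by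
  refine IsHermitian.ext fun i j => ?_
  rw [diagonal_mul, diagonal_mul, star_trivial]
  by_cases hij : G.Adj i j
  · rw [reversingWeight_mul_influenceWeight_of_adj hij,
      reversingWeight_mul_influenceWeight_of_adj hij.symm, mul_comm, add_comm]
  · simp [influenceWeight, hij, G.adj_comm j i]

theorem isHermitian_diagonal_reversingWeight_mul_influenceMatrix :
    (diagonal (reversingWeight G) * influenceMatrix G).IsHermitian := by
  rw [influenceMatrix_eq_influenceWeight_sub_diagonal, Matrix.mul_sub, diagonal_mul_diagonal]
  exact (isHermitian_diagonal_reversingWeight_mul_influenceWeight G).sub (isHermitian_diagonal _)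

theorem influenceMatrix_diagonalizable_general [Nonempty V] :
    ∃ (P D : Matrix V V ℝ), IsUnit P ∧ D.IsDiag ∧
      influenceMatrix G = P * D * P⁻¹ ∧
      ∃ c : V, (∀ i, P i c = 1) ∧ D c c = 0 := by
  obtain ⟨Q, d, hQ⟩ := IsEigenbasisMatrix.exists_of_posDef_of_isHermitian_mul
    (PosDef.diagonal (reversingWeight_pos G))
    (isHermitian_diagonal_reversingWeight_mul_influenceMatrix G)
  have hker : influenceMatrix G *ᵥ 1 = (0 : ℝ) • 1 := by
    rw [influenceMatrix_mulVec_one, zero_smul]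
  obtain ⟨c, hdc, hP⟩ := hQ.exists_updateCol one_ne_zero hker
  exact ⟨Q.updateCol c 1, diagonal _, hP.isUnit, isDiag_diagonal _, hP.eq_mul_diagonal_mul_inv,
    c, fun i => updateCol_self, by rw [diagonal_apply_eq, hdc]⟩

end InfluenceMatrix

/-- The influence matrix is diagonalizable over `ℝ`: `L = P·D·P⁻¹` with `P` invertible
and `D` diagonal; moreover one can take some column `c` of `P` to be the all-ones vector
with corresponding diagonal entry `D c c = 0`. -/
theorem influenceMatrix_diagonalizable {V : Type*} [Fintype V] [DecidableEq V]
    (G : SimpleGraph V) [DecidableRel G.Adj]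
    (hconn : G.Connected) (hcard : 2 ≤ Fintype.card V) :
    ∃ (P D : Matrix V V ℝ), IsUnit P ∧ D.IsDiag ∧
      influenceMatrix G = P * D * P⁻¹ ∧
      ∃ c : V, (∀ i, P i c = 1) ∧ D c c = 0 :=
  have := hconn.nonempty
  influenceMatrix_diagonalizable_general G
end

section
/- (Gautschi's inequality) For every real number x > 0 and every real number s with 0 < s < 1, one has x^{1-s} < Γ(x+1)/Γ(x+s) < (x+1)^{1-s}, where Γ denotes the Gamma function. -/
/-!
Log-convexity of `Γ` between `x` and `x + 1` gives Wendel's inequality `Γ(x + s) ≤ x ^ s * Γ(x)`.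
It bootstraps to a strict inequality: applied at `x + 1` it reads
`(x + s) * Γ(x + s) ≤ (x + 1) ^ s * (x * Γ(x))`, and `(x + 1) ^ s * x < (x + s) * x ^ s` by the
strict weighted AM-GM inequality for `x` and `x + 1`. Gautschi's lower bound is the strict
inequality at `(x, s)`; the upper bound is the one at `(x + s, 1 - s)`, weakened by `x + s < x + 1`.
-/

open Real

theorem geom_mean_lt_arith_mean2_weighted {w₁ w₂ p₁ p₂ : ℝ} (hw₁ : 0 < w₁) (hw₂ : 0 < w₂)
    (hp₁ : 0 ≤ p₁) (hp₂ : 0 ≤ p₂) (hw : w₁ + w₂ = 1) (hne : p₁ ≠ p₂) :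
    p₁ ^ w₁ * p₂ ^ w₂ < w₁ * p₁ + w₂ * p₂ := by
  have h := geom_mean_lt_arith_mean_weighted_iff_of_pos Finset.univ ![w₁, w₂] ![p₁, p₂]
    (by simp [Fin.forall_fin_two, hw₁, hw₂]) (by simp [hw])
    (by simp [Fin.forall_fin_two, hp₁, hp₂])
  simp only [Fin.prod_univ_two, Fin.sum_univ_two, Matrix.cons_val_zero, Matrix.cons_val_one] at h
  exact h.2 ⟨0, Finset.mem_univ _, 1, Finset.mem_univ _, hne⟩

theorem add_one_rpow_mul_lt {x s : ℝ} (hx : 0 < x) (hs0 : 0 < s) (hs1 : s < 1) :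
    (x + 1) ^ s * x < (x + s) * x ^ s := by
  have amgm : x ^ (1 - s) * (x + 1) ^ s < (1 - s) * x + s * (x + 1) :=
    geom_mean_lt_arith_mean2_weighted (sub_pos.2 hs1) hs0 hx.le (by positivity) (by ring)
      (lt_add_one x).ne
  calc (x + 1) ^ s * x = (x + 1) ^ s * (x ^ (1 - s) * x ^ s) := by
        rw [← rpow_add hx, sub_add_cancel, rpow_one]
    _ = x ^ (1 - s) * (x + 1) ^ s * x ^ s := by ring
    _ < ((1 - s) * x + s * (x + 1)) * x ^ s := by gcongr
    _ = (x + s) * x ^ s := by ring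

theorem Gamma_add_le_rpow_mul_Gamma {x s : ℝ} (hx : 0 < x) (hs0 : 0 ≤ s) (hs1 : s ≤ 1) :
    Gamma (x + s) ≤ x ^ s * Gamma x := by
  rcases hs0.eq_or_lt with rfl | hs0
  · simp
  rcases hs1.eq_or_lt with rfl | hs1
  · rw [Gamma_add_one hx.ne', rpow_one]
  have hΓ : 0 < Gamma x := Gamma_pos_of_pos hx
  calc Gamma (x + s) = Gamma ((1 - s) * x + s * (x + 1)) := by ring_nf
    _ ≤ Gamma x ^ (1 - s) * Gamma (x + 1) ^ s :=
        Gamma_mul_add_mul_le_rpow_Gamma_mul_rpow_Gamma hx (by positivity) (sub_pos.2 hs1) hs0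
          (sub_add_cancel 1 s)
    _ = x ^ s * (Gamma x ^ (1 - s) * Gamma x ^ s) := by
        rw [Gamma_add_one hx.ne', mul_rpow hx.le hΓ.le, mul_left_comm]
    _ = x ^ s * Gamma x := by rw [← rpow_add hΓ, sub_add_cancel, rpow_one]

theorem Gamma_add_lt_rpow_mul_Gamma {x s : ℝ} (hx : 0 < x) (hs0 : 0 < s) (hs1 : s < 1) :
    Gamma (x + s) < x ^ s * Gamma x := by
  have hxs : 0 < x + s := by positivity
  have hΓ : 0 < Gamma x := Gamma_pos_of_pos hx
  refine lt_of_mul_lt_mul_left ?_ hxs.le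
  calc (x + s) * Gamma (x + s) = Gamma (x + 1 + s) := by
        rw [add_right_comm, Gamma_add_one hxs.ne']
    _ ≤ (x + 1) ^ s * Gamma (x + 1) := Gamma_add_le_rpow_mul_Gamma (by positivity) hs0.le hs1.le
    _ = (x + 1) ^ s * x * Gamma x := by rw [Gamma_add_one hx.ne', mul_assoc]
    _ < (x + s) * x ^ s * Gamma x :=
        mul_lt_mul_of_pos_right (add_one_rpow_mul_lt hx hs0 hs1) hΓ
    _ = (x + s) * (x ^ s * Gamma x) := mul_assoc _ _ _

/-- Gautschi's inequality: for `x > 0` and `0 < s < 1`,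
`x^(1-s) < Γ(x+1)/Γ(x+s) < (x+1)^(1-s)`. -/
theorem gautschi_inequality (x s : ℝ) (hx : 0 < x) (hs0 : 0 < s) (hs1 : s < 1) :
    x ^ (1 - s) < Real.Gamma (x + 1) / Real.Gamma (x + s) ∧
    Real.Gamma (x + 1) / Real.Gamma (x + s) < (x + 1) ^ (1 - s) := by
  have hxs : 0 < x + s := by positivity
  have hΓ : 0 < Gamma (x + s) := Gamma_pos_of_pos hxs
  rw [lt_div_iff₀ hΓ, div_lt_iff₀ hΓ]
  constructor
  · calc x ^ (1 - s) * Gamma (x + s) < x ^ (1 - s) * (x ^ s * Gamma x) := by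
          gcongr
          exact Gamma_add_lt_rpow_mul_Gamma hx hs0 hs1
      _ = Gamma (x + 1) := by
          rw [← mul_assoc, ← rpow_add hx, sub_add_cancel, rpow_one, Gamma_add_one hx.ne']
  · calc Gamma (x + 1) = Gamma (x + s + (1 - s)) := by ring_nf
      _ < (x + s) ^ (1 - s) * Gamma (x + s) :=
          Gamma_add_lt_rpow_mul_Gamma hxs (sub_pos.2 hs1) (sub_lt_self 1 hs0)
      _ < (x + 1) ^ (1 - s) * Gamma (x + s) := by gcongr
end

section
/- For every real number λ with 0 < λ < 1 and all integers j, t with 1 ≤ j ≤ t, one has ((j-1)/(t+1))^λ ≤ ∏_{k=j}^{t} (1 - λ/k) ≤ (j/t)^λ. -/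
open BigOperators

/-! Each factor lies between `((k - 1) / k) ^ λ` (Bernoulli's inequality) and `(k / (k + 1)) ^ λ`
(convexity of the exponential), and both of these telescope over `k`. The resulting bounds
`((j - 1) / t) ^ λ` and `(j / (t + 1)) ^ λ` are slightly sharper than the stated ones. -/

theorem prod_Icc_div_succ₀ {K : Type*} [CommGroupWithZero K] {f : ℕ → K} {m n : ℕ} (hmn : m ≤ n)
    (hf : ∀ k ∈ Finset.Ioc m n, f k ≠ 0) :
    ∏ k ∈ Finset.Icc m n, f k / f (k + 1) = f m / f (n + 1) := by
  induction n, hmn using Nat.le_induction with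
  | base => simp
  | succ n hmn ih =>
    have hf_last : f (n + 1) ≠ 0 := hf _ (Finset.mem_Ioc.2 ⟨by lia, le_rfl⟩)
    have hf_init : ∀ k ∈ Finset.Ioc m n, f k ≠ 0 := fun k hk ↦
      hf k (Finset.Ioc_subset_Ioc_right n.le_succ hk)
    rw [Finset.prod_Icc_succ_top (by lia), ih hf_init, div_mul_div_cancel₀ hf_last]

theorem sub_one_div_rpow_le_one_sub_div {r x : ℝ} (hr₀ : 0 ≤ r) (hr₁ : r ≤ 1) (hx : 1 ≤ x) :
    ((x - 1) / x) ^ r ≤ 1 - r / x := by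
  have hx₀ : 0 < x := one_pos.trans_le hx
  calc ((x - 1) / x) ^ r = (1 + -(1 / x)) ^ r := by rw [sub_div, div_self hx₀.ne', sub_eq_add_neg]
    _ ≤ 1 + r * -(1 / x) :=
      rpow_one_add_le_one_add_mul_self (neg_le_neg ((div_le_one hx₀).2 hx)) hr₀ hr₁
    _ = 1 - r / x := by ring

theorem exp_neg_one_div_le_div_add_one {x : ℝ} (hx : 0 < x) :
    Real.exp (-(1 / x)) ≤ x / (x + 1) := by
  calc Real.exp (-(1 / x)) = (Real.exp (1 / x))⁻¹ := Real.exp_neg _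
    _ ≤ (1 / x + 1)⁻¹ := inv_anti₀ (by positivity) (Real.add_one_le_exp _)
    _ = x / (x + 1) := by field_simp; ring

theorem one_sub_div_le_div_add_one_rpow {r x : ℝ} (hr : 0 ≤ r) (hx : 0 < x) :
    1 - r / x ≤ (x / (x + 1)) ^ r := by
  calc 1 - r / x ≤ Real.exp (-(r / x)) := Real.one_sub_le_exp_neg _
    _ = Real.exp (-(1 / x)) ^ r := by rw [← Real.exp_mul]; ring_nf
    _ ≤ (x / (x + 1)) ^ r :=
      Real.rpow_le_rpow (Real.exp_nonneg _) (exp_neg_one_div_le_div_add_one hx) hr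

theorem sub_one_div_rpow_le_prod_one_sub_div {r : ℝ} (hr₀ : 0 ≤ r) (hr₁ : r ≤ 1) {m n : ℕ}
    (hm : 1 ≤ m) (hmn : m ≤ n) :
    (((m : ℝ) - 1) / n) ^ r ≤ ∏ k ∈ Finset.Icc m n, (1 - r / (k : ℝ)) := by
  have one_le_cast : ∀ k ∈ Finset.Icc m n, (1 : ℝ) ≤ k := fun k hk ↦
    Nat.one_le_cast.2 (hm.trans (Finset.mem_Icc.1 hk).1)
  have ratio_nonneg : ∀ k ∈ Finset.Icc m n, 0 ≤ ((k : ℝ) - 1) / k := fun k hk ↦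
    div_nonneg (sub_nonneg.2 (one_le_cast k hk)) k.cast_nonneg
  have telescope : ∏ k ∈ Finset.Icc m n, ((k : ℝ) - 1) / k = ((m : ℝ) - 1) / n := by
    have shifted_ne_zero : ∀ k ∈ Finset.Ioc m n, (k : ℝ) - 1 ≠ 0 := fun k hk ↦
      sub_ne_zero.2 (Nat.cast_ne_one.2 (hm.trans_lt (Finset.mem_Ioc.1 hk).1).ne')
    simpa using prod_Icc_div_succ₀ hmn shifted_ne_zero
  calc (((m : ℝ) - 1) / n) ^ r = ∏ k ∈ Finset.Icc m n, (((k : ℝ) - 1) / k) ^ r := by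
        rw [Real.finsetProd_rpow _ _ ratio_nonneg, telescope]
    _ ≤ ∏ k ∈ Finset.Icc m n, (1 - r / (k : ℝ)) :=
        Finset.prod_le_prod (fun k hk ↦ Real.rpow_nonneg (ratio_nonneg k hk) r) fun k hk ↦
          sub_one_div_rpow_le_one_sub_div hr₀ hr₁ (one_le_cast k hk)

theorem prod_one_sub_div_le_div_add_one_rpow {r : ℝ} (hr : 0 ≤ r) {m n : ℕ} (hm : 1 ≤ m)
    (hrm : r ≤ m) (hmn : m ≤ n) :
    ∏ k ∈ Finset.Icc m n, (1 - r / (k : ℝ)) ≤ ((m : ℝ) / ((n : ℝ) + 1)) ^ r := by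
  have cast_pos : ∀ k ∈ Finset.Icc m n, (0 : ℝ) < k := fun k hk ↦
    Nat.cast_pos.2 (hm.trans (Finset.mem_Icc.1 hk).1)
  have factor_nonneg : ∀ k ∈ Finset.Icc m n, 0 ≤ 1 - r / (k : ℝ) := fun k hk ↦
    sub_nonneg.2 <| (div_le_one (cast_pos k hk)).2 <|
      hrm.trans (Nat.cast_le.2 (Finset.mem_Icc.1 hk).1)
  have telescope : ∏ k ∈ Finset.Icc m n, (k : ℝ) / ((k : ℝ) + 1) = (m : ℝ) / ((n : ℝ) + 1) := by
    have cast_ne_zero : ∀ k ∈ Finset.Ioc m n, (k : ℝ) ≠ 0 := fun k hk ↦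
      (cast_pos k (Finset.Ioc_subset_Icc_self hk)).ne'
    simpa using prod_Icc_div_succ₀ hmn cast_ne_zero
  calc ∏ k ∈ Finset.Icc m n, (1 - r / (k : ℝ))
      ≤ ∏ k ∈ Finset.Icc m n, ((k : ℝ) / ((k : ℝ) + 1)) ^ r :=
        Finset.prod_le_prod factor_nonneg fun k hk ↦
          one_sub_div_le_div_add_one_rpow hr (cast_pos k hk)
    _ = ((m : ℝ) / ((n : ℝ) + 1)) ^ r := by
        rw [Real.finsetProd_rpow _ _ fun k _ ↦ by positivity, telescope]

/-- For `0 < λ < 1` and integers `1 ≤ j ≤ t`,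
`((j-1)/(t+1))^λ ≤ ∏_{k=j}^{t} (1 - λ/k) ≤ (j/t)^λ`. -/
theorem prod_one_sub_div_bounds (lam : ℝ) (hlam0 : 0 < lam) (hlam1 : lam < 1)
    (j t : ℕ) (hj : 1 ≤ j) (hjt : j ≤ t) :
    (((j : ℝ) - 1) / ((t : ℝ) + 1)) ^ lam ≤ ∏ k ∈ Finset.Icc j t, (1 - lam / (k : ℝ)) ∧
    ∏ k ∈ Finset.Icc j t, (1 - lam / (k : ℝ)) ≤ ((j : ℝ) / (t : ℝ)) ^ lam := by
  have one_le_j : (1 : ℝ) ≤ j := Nat.one_le_cast.2 hj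
  have : (0 : ℝ) ≤ j - 1 := sub_nonneg.2 one_le_j
  have t_pos : (0 : ℝ) < t := Nat.cast_pos.2 (hj.trans hjt)
  have t_le : (t : ℝ) ≤ t + 1 := le_add_of_nonneg_right zero_le_one
  constructor
  · calc (((j : ℝ) - 1) / ((t : ℝ) + 1)) ^ lam ≤ (((j : ℝ) - 1) / t) ^ lam := by gcongr
      _ ≤ ∏ k ∈ Finset.Icc j t, (1 - lam / (k : ℝ)) :=
        sub_one_div_rpow_le_prod_one_sub_div hlam0.le hlam1.le hj hjt
  · calc ∏ k ∈ Finset.Icc j t, (1 - lam / (k : ℝ)) ≤ ((j : ℝ) / ((t : ℝ) + 1)) ^ lam :=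
        prod_one_sub_div_le_div_add_one_rpow hlam0.le hj (hlam1.le.trans one_le_j) hjt
      _ ≤ ((j : ℝ) / t) ^ lam := by gcongr
end
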